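/- arXiv:1412.4376 — 2 statements merged into one kernel-verified Lean document; each statement's English description precedes it below -/
import Mathlib

section
/- Let α > 1 and let u : (0,1) → ℝ be differentiable with u ∈ L²_x and D_{x,α}u ∈ L²_x. Then there is a constant C, depending only on α, such that ‖x^{−1} u‖_{L²_x} ≤ C ‖D_{x,α}u‖_{L²_x} and ‖u'‖_{L²_x} ≤ C ‖D_{x,α}u‖_{L²_x}. -/
open MeasureTheory Set
open scoped ENNReal

/-- The integral operator `(A_α φ)(x) = x^{−α} ∫₀ˣ y^α φ(y) dy`. -/
noncomputable def Aa (α : ℝ) (φ : ℝ → ℝ) : ℝ → ℝ :=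
  fun x => x ^ (-α) * ∫ y in Ioo (0:ℝ) x, y ^ α * φ y

/-- The integral operator `(A_α^* φ)(x) = x^{α−1} ∫ₓ¹ y^{1−α} φ(y) dy`. -/
noncomputable def Astar (α : ℝ) (φ : ℝ → ℝ) : ℝ → ℝ :=
  fun x => x ^ (α - 1) * ∫ y in Ioo x (1:ℝ), y ^ (1 - α) * φ y

/-- The twisted derivative `D_{x,α} φ = φ' + (α/x) φ`. -/
noncomputable def Dtw (α : ℝ) (φ : ℝ → ℝ) : ℝ → ℝ :=
  fun x => deriv φ x + (α / x) * φ x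

/-- The formal adjoint `D*_{x,α} φ = −φ' + ((α−1)/x) φ`. -/
noncomputable def Dstar (α : ℝ) (φ : ℝ → ℝ) : ℝ → ℝ :=
  fun x => -deriv φ x + ((α - 1) / x) * φ x

/-- Membership in `L²_x = L²((0,1), x dx)`. -/
def MemL2x (φ : ℝ → ℝ) : Prop := IntegrableOn (fun x => φ x ^ 2 * x) (Ioo (0:ℝ) 1)

/-- The `L²_x` norm, `‖φ‖ = (∫₀¹ φ(x)² x dx)^{1/2}`. -/
noncomputable def L2xNorm (φ : ℝ → ℝ) : ℝ := Real.sqrt (∫ x in Ioo (0:ℝ) 1, φ x ^ 2 * x)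

/-- The `L²_x` norm as an extended nonnegative real, `(∫₀¹ φ(x)² x dx)^{1/2}`. -/
noncomputable def eL2x (φ : ℝ → ℝ) : ℝ≥0∞ :=
  (∫⁻ x in Ioo (0:ℝ) 1, ENNReal.ofReal (φ x ^ 2 * x)) ^ (1/2 : ℝ)

/-!
Expanding the square, `(D_{x,α} u)² x = (u'² + (α u / x)²) x + α (u²)'`, so integrating over
`[a, b]` bounds `∫ (u'² + (α u / x)²) x` by `∫ (D_{x,α} u)² x + α u(a)²`, and both estimates follow
with `C = 1` once `u(a) → 0` as `a → 0`. To see the latter, note `(x^α u)' = x^α D_{x,α} u`: by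
Cauchy-Schwarz the increment of `x^α u` over `[a, b]` is at most
`b^α ((2α)⁻¹ ∫₀ᵇ (D_{x,α} u)² x)^{1/2}`. Since `1/x` is not integrable at `0`, `u ∈ L²_x` makes
`a u(a)`, hence `a^α u(a)` as `α ≥ 1`, arbitrarily small along some `a → 0`. Therefore
`u(b)² ≤ (2α)⁻¹ ∫₀ᵇ (D_{x,α} u)² x`, which vanishes as `b → 0`.
-/

open Filter Topology

/-- The energy density `(u'² + (α u / x)²) x`, the weight `x` of `L²_x` included. It is the part of
`(D_{x,α} u)² x` left over once the exact derivative `α (u²)'` is split off. -/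
noncomputable def energyDensity (α : ℝ) (u : ℝ → ℝ) : ℝ → ℝ :=
  fun x => deriv u x ^ 2 * x + (α * (u x / x)) ^ 2 * x

lemma abs_integral_mul_le_sqrt_mul_sqrt {X : Type*} [MeasurableSpace X] {μ : Measure X}
    {f g : X → ℝ} (hf : MemLp f 2 μ) (hg : MemLp g 2 μ) :
    |∫ x, f x * g x ∂μ| ≤ √(∫ x, f x ^ 2 ∂μ) * √(∫ x, g x ^ 2 ∂μ) := by
  have inner_toLp {φ ψ : X → ℝ} (hφ : MemLp φ 2 μ) (hψ : MemLp ψ 2 μ) :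
      inner ℝ (hφ.toLp φ) (hψ.toLp ψ) = ∫ x, φ x * ψ x ∂μ := by
    refine integral_congr_ae ?_
    filter_upwards [hφ.coeFn_toLp, hψ.coeFn_toLp] with x hφx hψx
    simp only [hφx, hψx, RCLike.inner_apply, conj_trivial, mul_comm]
  have cauchy_schwarz := real_inner_mul_inner_self_le (hf.toLp f) (hg.toLp g)
  simp only [inner_toLp, ← pow_two] at cauchy_schwarz
  rw [← Real.sqrt_mul (integral_nonneg fun x => sq_nonneg (f x))]
  exact Real.abs_le_sqrt cauchy_schwarz

lemma frequently_mul_lt_of_integrableOn_Ioo {g : ℝ → ℝ} {b η : ℝ} (hb : 0 < b)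
    (hg : IntegrableOn g (Ioo 0 b)) (hη : 0 < η) : ∃ᶠ x in 𝓝[>] 0, x * g x < η := by
  intro h
  obtain ⟨δ, hδ, hsub⟩ := mem_nhdsGT_iff_exists_Ioo_subset.1 (h.and (Ioo_mem_nhdsGT hb))
  have hinv : IntegrableOn (fun x : ℝ => x⁻¹) (Ioo 0 δ) := by
    refine Integrable.mono' ((hg.mono_set fun x hx => (hsub hx).2).const_mul η⁻¹) (by fun_prop) ?_
    filter_upwards [ae_restrict_mem measurableSet_Ioo] with x hx
    rw [Real.norm_of_nonneg (inv_nonneg.2 hx.1.le), inv_mul_eq_div, inv_eq_one_div,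
      div_le_div_iff₀ hx.1 hη, one_mul, mul_comm]
    exact not_lt.1 (hsub hx).1
  rw [← intervalIntegrable_iff_integrableOn_Ioo_of_le (le_of_lt hδ),
    intervalIntegrable_inv_iff] at hinv
  exact hinv.elim (ne_of_lt hδ) (· left_mem_uIcc)

lemma tendsto_intervalIntegral_nhdsGT {E : Type*} [NormedAddCommGroup E] [NormedSpace ℝ E]
    {g : ℝ → E} {a b : ℝ} (hab : a < b) (hg : IntegrableOn g (Ioo a b)) :
    Tendsto (fun t => ∫ x in a..t, g x) (𝓝[>] a) (𝓝 0) := by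
  have hg' : IntegrableOn g (uIcc a b) := by
    rwa [uIcc_of_le hab.le, integrableOn_Icc_iff_integrableOn_Ioo]
  have hcont := intervalIntegral.continuousOn_primitive_interval hg' a left_mem_uIcc
  rw [ContinuousWithinAt, intervalIntegral.integral_same, uIcc_of_le hab.le] at hcont
  exact hcont.mono_left <|
    nhdsWithin_le_of_mem <| mem_of_superset (Ioo_mem_nhdsGT hab) Ioo_subset_Icc_self

lemma memLp_restrict_of_continuousOn_of_isCompact {X E : Type*} [TopologicalSpace X]
    [MeasurableSpace X] [OpensMeasurableSpace X] [NormedAddCommGroup E] {μ : Measure X}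
    [IsFiniteMeasureOnCompacts μ] {f : X → E} {K : Set X} (hf : ContinuousOn f K)
    (hK : IsCompact K) (hKm : MeasurableSet K) (p : ℝ≥0∞) : MemLp f p (μ.restrict K) := by
  obtain ⟨C, hC⟩ := hK.exists_bound_of_continuousOn hf
  have : IsFiniteMeasure (μ.restrict K) := isFiniteMeasure_restrict.2 hK.measure_lt_top.ne
  exact .of_bound (hf.aestronglyMeasurable_of_isCompact hK hKm) C
    ((ae_restrict_mem hKm).mono hC)

lemma integral_rpow_sub_half_sq_le {α a b : ℝ} (hα : 0 < α) (ha : 0 ≤ a) (hab : a ≤ b) :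
    ∫ x in a..b, (x ^ (α - 1 / 2)) ^ 2 ≤ (b ^ α) ^ 2 * (2 * α)⁻¹ := by
  have sq_rpow {x : ℝ} (hx : 0 ≤ x) (r : ℝ) : (x ^ r) ^ 2 = x ^ (2 * r) := by
    rw [← Real.rpow_mul_natCast hx, mul_comm, Nat.cast_ofNat]
  calc ∫ x in a..b, (x ^ (α - 1 / 2)) ^ 2
      = ∫ x in a..b, x ^ (2 * α - 1) := by
        refine intervalIntegral.integral_congr fun x hx => ?_
        rw [uIcc_of_le hab] at hx
        simp only [sq_rpow (ha.trans hx.1)]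
        ring_nf
    _ = (b ^ (2 * α) - a ^ (2 * α)) / (2 * α) := by
        rw [integral_rpow (Or.inl (by linarith)), sub_add_cancel]
    _ ≤ b ^ (2 * α) / (2 * α) := by
        gcongr
        exact sub_le_self _ (Real.rpow_nonneg ha _)
    _ = (b ^ α) ^ 2 * (2 * α)⁻¹ := by rw [sq_rpow (ha.trans hab), div_eq_mul_inv]

lemma abs_integral_rpow_mul_le {α a b : ℝ} {f : ℝ → ℝ} (hα : 0 < α) (ha : 0 < a) (hab : a ≤ b)
    (hf : MemLp f 2 (volume.restrict (Icc a b))) :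
    |∫ x in a..b, x ^ α * f x| ≤ b ^ α * √((2 * α)⁻¹ * ∫ x in a..b, f x ^ 2 * x) := by
  have hpos {x : ℝ} (hx : x ∈ Icc a b) : 0 < x := ha.trans_le hx.1
  have continuousOn_rpow (r : ℝ) : ContinuousOn (fun x : ℝ => x ^ r) (Icc a b) :=
    continuousOn_id.rpow_const fun x hx => Or.inl (hpos hx).ne'
  have hpow : MemLp (fun x => x ^ (α - 1 / 2)) 2 (volume.restrict (Icc a b)) :=
    memLp_restrict_of_continuousOn_of_isCompact (continuousOn_rpow _) isCompact_Icc
      measurableSet_Icc 2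
  have hsqrt : MemLp (fun x => √x * f x) 2 (volume.restrict (Icc a b)) :=
    hf.mul' (memLp_restrict_of_continuousOn_of_isCompact Real.continuous_sqrt.continuousOn
      isCompact_Icc measurableSet_Icc ⊤)
  have hb : 0 ≤ b ^ α := Real.rpow_nonneg (ha.le.trans hab) α
  calc |∫ x in a..b, x ^ α * f x|
      = |∫ x in Icc a b, x ^ (α - 1 / 2) * (√x * f x)| := by
        rw [intervalIntegral.integral_of_le hab, ← integral_Icc_eq_integral_Ioc]
        congr 1
        refine setIntegral_congr_fun measurableSet_Icc fun x hx => ?_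
        simp only [Real.sqrt_eq_rpow, ← mul_assoc, ← Real.rpow_add (hpos hx), sub_add_cancel]
    _ ≤ √(∫ x in Icc a b, (x ^ (α - 1 / 2)) ^ 2) * √(∫ x in Icc a b, (√x * f x) ^ 2) :=
        abs_integral_mul_le_sqrt_mul_sqrt hpow hsqrt
    _ = √(∫ x in a..b, (x ^ (α - 1 / 2)) ^ 2) * √(∫ x in a..b, f x ^ 2 * x) := by
        simp only [intervalIntegral.integral_of_le hab, ← integral_Icc_eq_integral_Ioc]
        congr 2
        refine setIntegral_congr_fun measurableSet_Icc fun x hx => ?_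
        simp only [mul_pow, Real.sq_sqrt (hpos hx).le, mul_comm]
    _ ≤ √((b ^ α) ^ 2 * (2 * α)⁻¹) * √(∫ x in a..b, f x ^ 2 * x) := by
        gcongr
        exact integral_rpow_sub_half_sq_le hα ha.le hab
    _ = b ^ α * √((2 * α)⁻¹ * ∫ x in a..b, f x ^ 2 * x) := by
        rw [Real.sqrt_mul (sq_nonneg _), Real.sqrt_sq hb, Real.sqrt_mul (by positivity), mul_assoc]

namespace MemL2x

variable {φ : ℝ → ℝ}

lemma ae_nonneg_sq_mul_self : 0 ≤ᵐ[volume.restrict (Ioo 0 1)] fun x => φ x ^ 2 * x := by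
  filter_upwards [ae_restrict_mem measurableSet_Ioo] with x hx
  exact mul_nonneg (sq_nonneg _) hx.1.le

lemma ofReal_integral (hφ : MemL2x φ) :
    ENNReal.ofReal (∫ x in 0..1, φ x ^ 2 * x) =
      ∫⁻ x in Ioo 0 1, ENNReal.ofReal (φ x ^ 2 * x) := by
  rw [intervalIntegral.integral_of_le zero_le_one, integral_Ioc_eq_integral_Ioo,
    ofReal_integral_eq_lintegral_ofReal hφ ae_nonneg_sq_mul_self]

lemma of_eL2x_lt_top (hφ : AEMeasurable φ (volume.restrict (Ioo 0 1))) (h : eL2x φ < ⊤) :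
    MemL2x φ :=
  (lintegral_ofReal_ne_top_iff_integrable
    ((hφ.pow_const 2).mul aemeasurable_id).aestronglyMeasurable ae_nonneg_sq_mul_self).1
    ((ENNReal.rpow_lt_top_iff_of_pos one_half_pos).1 h).ne

lemma frequently_abs_mul_lt (hφ : MemL2x φ) {η : ℝ} (hη : 0 < η) :
    ∃ᶠ x in 𝓝[>] 0, |x * φ x| < η := by
  refine (frequently_mul_lt_of_integrableOn_Ioo one_pos hφ (pow_pos hη 2)).mono fun x hx => ?_
  exact abs_lt_of_sq_lt_sq (by linarith [hx]) hη.le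

lemma memLp_Icc (hφ : MemL2x φ) (hm : AEMeasurable φ (volume.restrict (Ioo 0 1))) {a b : ℝ}
    (ha : 0 < a) (hb : b < 1) : MemLp φ 2 (volume.restrict (Icc a b)) := by
  have hsub : Icc a b ⊆ Ioo 0 1 := Icc_subset_Ioo ha hb
  refine (memLp_two_iff_integrable_sq
    (hm.mono_measure (Measure.restrict_mono_set _ hsub)).aestronglyMeasurable).2 ?_
  have hinv : ContinuousOn (fun x : ℝ => x⁻¹) (Icc a b) :=
    continuousOn_id.inv₀ fun x hx => (hsub hx).1.ne'
  refine ((hφ.mono_set hsub).continuousOn_mul hinv isCompact_Icc).congr_fun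
    (fun x hx => ?_) measurableSet_Icc
  have hx0 := (hsub hx).1
  field_simp

lemma intervalIntegral_mono (hφ : MemL2x φ) {a b c d : ℝ} (hc : 0 ≤ c) (hca : c ≤ a)
    (hab : a ≤ b) (hbd : b ≤ d) (hd : d ≤ 1) :
    ∫ x in a..b, φ x ^ 2 * x ≤ ∫ x in c..d, φ x ^ 2 * x := by
  have hcd : c ≤ d := hca.trans (hab.trans hbd)
  refine intervalIntegral.integral_mono_interval hca hab hbd ?_ ?_
  · filter_upwards [ae_restrict_mem measurableSet_Ioc] with x hx
    exact mul_nonneg (sq_nonneg _) (hc.trans hx.1.le)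
  · exact (intervalIntegrable_iff_integrableOn_Ioo_of_le hcd).2
      (hφ.mono_set (Ioo_subset_Ioo hc hd))

end MemL2x

section TwistedDerivative

variable {α a b : ℝ} {u : ℝ → ℝ}

lemma energyDensity_eq (α : ℝ) (u : ℝ → ℝ) {x : ℝ} (hx : x ≠ 0) :
    energyDensity α u x = Dtw α u x ^ 2 * x - α * (2 * u x * deriv u x) := by
  simp only [Dtw, energyDensity]
  field_simp
  ring

lemma energyDensity_nonneg {x : ℝ} (hx : 0 ≤ x) : 0 ≤ energyDensity α u x := by
  unfold energyDensity
  positivity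

lemma hasDerivAt_rpow_mul {x : ℝ} (hx : 0 < x) (hu : DifferentiableAt ℝ u x) :
    HasDerivAt (fun y => y ^ α * u y) (x ^ α * Dtw α u x) x := by
  refine ((Real.hasDerivAt_rpow_const (Or.inl hx.ne')).mul hu.hasDerivAt).congr_deriv ?_
  rw [Real.rpow_sub_one hx.ne', Dtw]
  ring

lemma aemeasurable_Ioo_of_differentiableAt (hu : ∀ x ∈ Ioo a b, DifferentiableAt ℝ u x) :
    AEMeasurable u (volume.restrict (Ioo a b)) :=
  ContinuousOn.aemeasurable (fun x hx => (hu x hx).continuousAt.continuousWithinAt)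
    measurableSet_Ioo

lemma aemeasurable_Dtw {μ : Measure ℝ} (hu : AEMeasurable u μ) : AEMeasurable (Dtw α u) μ := by
  have := measurable_deriv u
  unfold Dtw
  fun_prop

lemma aemeasurable_energyDensity {μ : Measure ℝ} (hu : AEMeasurable u μ) :
    AEMeasurable (energyDensity α u) μ := by
  unfold energyDensity
  have := measurable_deriv u
  fun_prop

variable (hu : ∀ x ∈ Ioo 0 1, DifferentiableAt ℝ u x) (hD : MemL2x (Dtw α u))
include hu hD

lemma memLp_Dtw_Icc (ha : 0 < a) (hb : b < 1) :
    MemLp (Dtw α u) 2 (volume.restrict (Icc a b)) :=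
  hD.memLp_Icc (aemeasurable_Dtw (aemeasurable_Ioo_of_differentiableAt hu)) ha hb

lemma intervalIntegrable_Dtw (ha : 0 < a) (hab : a ≤ b) (hb : b < 1) :
    IntervalIntegrable (Dtw α u) volume a b :=
  (intervalIntegrable_iff_integrableOn_Icc_of_le hab).2
    ((memLp_Dtw_Icc hu hD ha hb).integrable one_le_two)

lemma intervalIntegrable_deriv (ha : 0 < a) (hab : a ≤ b) (hb : b < 1) :
    IntervalIntegrable (deriv u) volume a b := by
  have hu_div : ContinuousOn (fun x => α / x * u x) (uIcc a b) := by
    rw [uIcc_of_le hab]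
    intro x hx
    have hx01 := Icc_subset_Ioo ha hb hx
    exact ((continuousAt_const.div continuousAt_id hx01.1.ne').mul
      (hu x hx01).continuousAt).continuousWithinAt
  refine ((intervalIntegrable_Dtw hu hD ha hab hb).sub hu_div.intervalIntegrable).congr
    fun x _ => ?_
  simp only [Dtw, add_sub_cancel_right]

lemma integral_rpow_mul_Dtw (ha : 0 < a) (hab : a ≤ b) (hb : b < 1) :
    ∫ x in a..b, x ^ α * Dtw α u x = b ^ α * u b - a ^ α * u a := by
  have hsub : uIcc a b ⊆ Ioo 0 1 := uIcc_of_le hab ▸ Icc_subset_Ioo ha hb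
  exact intervalIntegral.integral_eq_sub_of_hasDerivAt (f := fun x => x ^ α * u x)
    (fun x hx => hasDerivAt_rpow_mul (hsub hx).1 (hu x (hsub hx)))
    ((intervalIntegrable_Dtw hu hD ha hab hb).continuousOn_mul
      (continuousOn_id.rpow_const fun x hx => Or.inl (hsub hx).1.ne'))

lemma abs_rpow_mul_sub_rpow_mul_le (hα : 0 < α) (ha : 0 < a) (hab : a ≤ b) (hb : b < 1) :
    |b ^ α * u b - a ^ α * u a| ≤ b ^ α * √((2 * α)⁻¹ * ∫ x in 0..b, Dtw α u x ^ 2 * x) := by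
  have hb0 : 0 ≤ b := ha.le.trans hab
  rw [← integral_rpow_mul_Dtw hu hD ha hab hb]
  refine (abs_integral_rpow_mul_le hα ha hab (memLp_Dtw_Icc hu hD ha hb)).trans ?_
  gcongr
  exact hD.intervalIntegral_mono le_rfl ha.le hab le_rfl hb.le

lemma abs_le_sqrt_integral_Dtw (hα : 1 ≤ α) (hL : MemL2x u) (hb : b ∈ Ioo 0 1) :
    |u b| ≤ √((2 * α)⁻¹ * ∫ x in 0..b, Dtw α u x ^ 2 * x) := by
  have hbα : 0 < b ^ α := Real.rpow_pos_of_pos hb.1 α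
  refine le_of_mul_le_mul_left (le_of_forall_pos_lt_add fun η hη => ?_) hbα
  obtain ⟨a, ha_small, ha, hab⟩ :=
    ((hL.frequently_abs_mul_lt hη).and_eventually (Ioo_mem_nhdsGT hb.1)).exists
  have rpow_mul_small : |a ^ α * u a| < η := by
    refine lt_of_le_of_lt ?_ ha_small
    rw [abs_mul, abs_mul, abs_of_pos (Real.rpow_pos_of_pos ha α), abs_of_pos ha]
    gcongr
    exact Real.rpow_le_self_of_le_one ha.le (hab.trans hb.2).le hα
  calc b ^ α * |u b| = |b ^ α * u b| := by rw [abs_mul, abs_of_pos hbα]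
    _ ≤ |b ^ α * u b - a ^ α * u a| + |a ^ α * u a| :=
        sub_le_iff_le_add.1 (abs_sub_abs_le_abs_sub _ _)
    _ < _ := add_lt_add_of_le_of_lt
        (abs_rpow_mul_sub_rpow_mul_le hu hD (one_pos.trans_le hα) ha hab.le hb.2) rpow_mul_small

lemma tendsto_nhdsGT_zero_of_memL2x_Dtw (hα : 1 ≤ α) (hL : MemL2x u) :
    Tendsto u (𝓝[>] 0) (𝓝 0) := by
  refine squeeze_zero_norm' (a := fun b => √((2 * α)⁻¹ * ∫ x in 0..b, Dtw α u x ^ 2 * x)) ?_ ?_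
  · filter_upwards [Ioo_mem_nhdsGT one_pos] with b hb
    exact abs_le_sqrt_integral_Dtw hu hD hα hL hb
  · simpa using ((tendsto_intervalIntegral_nhdsGT one_pos hD).const_mul (2 * α)⁻¹).sqrt

lemma intervalIntegrable_mul_deriv (ha : 0 < a) (hab : a ≤ b) (hb : b < 1) :
    IntervalIntegrable (fun x => 2 * u x * deriv u x) volume a b := by
  refine (intervalIntegrable_deriv hu hD ha hab hb).continuousOn_mul ?_
  rw [uIcc_of_le hab]
  exact continuousOn_const.mul fun x hx =>
    (hu x (Icc_subset_Ioo ha hb hx)).continuousAt.continuousWithinAt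

lemma intervalIntegrable_energyDensity (ha : 0 < a) (hab : a ≤ b) (hb : b < 1) :
    IntervalIntegrable (energyDensity α u) volume a b := by
  have hsub : uIcc a b ⊆ Ioo 0 1 := uIcc_of_le hab ▸ Icc_subset_Ioo ha hb
  refine ((hD.mono_set hsub).intervalIntegrable.sub
    ((intervalIntegrable_mul_deriv hu hD ha hab hb).const_mul α)).congr fun x hx => ?_
  exact (energyDensity_eq α u (hsub (uIoc_subset_uIcc hx)).1.ne').symm

lemma integral_energyDensity (ha : 0 < a) (hab : a ≤ b) (hb : b < 1) :
    ∫ x in a..b, energyDensity α u x =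
      (∫ x in a..b, Dtw α u x ^ 2 * x) - α * (u b ^ 2 - u a ^ 2) := by
  have hsub : uIcc a b ⊆ Ioo 0 1 := uIcc_of_le hab ▸ Icc_subset_Ioo ha hb
  have h_int := intervalIntegrable_mul_deriv hu hD ha hab hb
  have integral_deriv_sq : ∫ x in a..b, 2 * u x * deriv u x = u b ^ 2 - u a ^ 2 :=
    intervalIntegral.integral_eq_sub_of_hasDerivAt (f := fun x => u x ^ 2)
      (fun x hx => by simpa using (hu x (hsub hx)).hasDerivAt.fun_pow 2) h_int
  rw [← integral_deriv_sq, ← intervalIntegral.integral_const_mul, ← intervalIntegral.integral_sub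
    (hD.mono_set hsub).intervalIntegrable (h_int.const_mul α)]
  exact intervalIntegral.integral_congr fun x hx => energyDensity_eq α u (hsub hx).1.ne'

lemma setLIntegral_Icc_energyDensity_le (hα : 0 ≤ α) (ha : 0 < a) (hab : a ≤ b) (hb : b < 1) :
    ∫⁻ x in Icc a b, ENNReal.ofReal (energyDensity α u x) ≤
      ENNReal.ofReal ((∫ x in 0..1, Dtw α u x ^ 2 * x) + α * u a ^ 2) := by
  have h_nonneg : 0 ≤ᵐ[volume.restrict (Icc a b)] energyDensity α u := by
    filter_upwards [ae_restrict_mem measurableSet_Icc] with x hx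
    exact energyDensity_nonneg (ha.le.trans hx.1)
  rw [← ofReal_integral_eq_lintegral_ofReal ((intervalIntegrable_iff_integrableOn_Icc_of_le hab).1
      (intervalIntegrable_energyDensity hu hD ha hab hb)) h_nonneg,
    integral_Icc_eq_integral_Ioc, ← intervalIntegral.integral_of_le hab,
    integral_energyDensity hu hD ha hab hb]
  refine ENNReal.ofReal_le_ofReal ?_
  calc (∫ x in a..b, Dtw α u x ^ 2 * x) - α * (u b ^ 2 - u a ^ 2)
      ≤ (∫ x in a..b, Dtw α u x ^ 2 * x) + α * u a ^ 2 := by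
        linarith [mul_nonneg hα (sq_nonneg (u b))]
    _ ≤ (∫ x in 0..1, Dtw α u x ^ 2 * x) + α * u a ^ 2 := by
        gcongr
        exact hD.intervalIntegral_mono le_rfl ha.le hab hb.le le_rfl

lemma lintegral_energyDensity_le (hα : 1 ≤ α) (hL : MemL2x u) :
    ∫⁻ x in Ioo 0 1, ENNReal.ofReal (energyDensity α u x) ≤
      ENNReal.ofReal (∫ x in 0..1, Dtw α u x ^ 2 * x) := by
  have hu_meas := aemeasurable_Ioo_of_differentiableAt hu
  have tendsto_left : Tendsto (fun t : ℝ => t) (𝓝[>] 0) (𝓝 0) := nhdsWithin_le_nhds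
  have tendsto_right : Tendsto (fun t : ℝ => 1 - t) (𝓝[>] 0) (𝓝 1) := by
    simpa using tendsto_left.const_sub 1
  have exhaustion := (aecover_Ioo_of_Icc (μ := volume) tendsto_left
    tendsto_right).lintegral_tendsto_of_countably_generated
    (f := fun x => ENNReal.ofReal (energyDensity α u x))
    (aemeasurable_energyDensity hu_meas).ennreal_ofReal
  have boundary_term : Tendsto (fun t => (∫ x in 0..1, Dtw α u x ^ 2 * x) + α * u t ^ 2) (𝓝[>] 0)
      (𝓝 (∫ x in 0..1, Dtw α u x ^ 2 * x)) := by
    simpa using (((tendsto_nhdsGT_zero_of_memL2x_Dtw hu hD hα hL).pow 2).const_mul α).const_add _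
  refine le_of_tendsto_of_tendsto exhaustion (ENNReal.tendsto_ofReal boundary_term) ?_
  filter_upwards [Ioo_mem_nhdsGT one_half_pos] with t ht
  rw [Measure.restrict_restrict measurableSet_Icc,
    inter_eq_left.2 (Icc_subset_Ioo ht.1 (sub_lt_self 1 ht.1))]
  exact setLIntegral_Icc_energyDensity_le hu hD (zero_le_one.trans hα) ht.1
    (by linarith [ht.2]) (sub_lt_self 1 ht.1)

end TwistedDerivative

lemma eL2x_le_eL2x_Dtw {α : ℝ} (hα : 1 ≤ α) {u φ : ℝ → ℝ}
    (hu : ∀ x ∈ Ioo 0 1, DifferentiableAt ℝ u x) (hL : eL2x u < ⊤)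
    (hφ : ∀ x ∈ Ioo 0 1, φ x ^ 2 * x ≤ energyDensity α u x) :
    eL2x φ ≤ eL2x (Dtw α u) := by
  obtain hD | hD := eq_top_or_lt_top (eL2x (Dtw α u))
  · exact hD ▸ le_top
  have hu_meas := aemeasurable_Ioo_of_differentiableAt hu
  have hD_mem : MemL2x (Dtw α u) := .of_eL2x_lt_top (aemeasurable_Dtw hu_meas) hD
  refine ENNReal.rpow_le_rpow ?_ one_half_pos.le
  calc ∫⁻ x in Ioo 0 1, ENNReal.ofReal (φ x ^ 2 * x)
      ≤ ∫⁻ x in Ioo 0 1, ENNReal.ofReal (energyDensity α u x) :=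
        setLIntegral_mono' measurableSet_Ioo fun x hx => ENNReal.ofReal_le_ofReal (hφ x hx)
    _ ≤ ENNReal.ofReal (∫ x in 0..1, Dtw α u x ^ 2 * x) :=
        lintegral_energyDensity_le hu hD_mem hα (.of_eL2x_lt_top hu_meas hL)
    _ = ∫⁻ x in Ioo 0 1, ENNReal.ofReal (Dtw α u x ^ 2 * x) := hD_mem.ofReal_integral

theorem H1_alpha_bounds_general {α : ℝ} (hα : 1 ≤ α) (u : ℝ → ℝ)
    (hu : ∀ x ∈ Ioo 0 1, DifferentiableAt ℝ u x) (hL : eL2x u < ⊤) :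
    eL2x (fun x => u x / x) ≤ eL2x (Dtw α u) ∧ eL2x (deriv u) ≤ eL2x (Dtw α u) := by
  constructor <;> refine eL2x_le_eL2x_Dtw hα hu hL fun x hx => ?_
  · have hα_sq : 1 ≤ α ^ 2 := one_le_pow₀ hα
    have hx0 := hx.1.le
    calc (u x / x) ^ 2 * x ≤ (α * (u x / x)) ^ 2 * x := by
          rw [mul_pow]
          gcongr
          exact le_mul_of_one_le_left (sq_nonneg _) hα_sq
      _ ≤ energyDensity α u x := le_add_of_nonneg_left (by positivity)
  · exact le_add_of_nonneg_right (mul_nonneg (sq_nonneg _) hx.1.le)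

/-- For `α > 1` there is `C = C(α) > 0` such that for every `u` differentiable on `(0,1)`
with `u ∈ L²_x` and `D_{x,α} u ∈ L²_x` one has
`‖x⁻¹ u‖_{L²_x} ≤ C ‖D_{x,α} u‖_{L²_x}` and `‖u'‖_{L²_x} ≤ C ‖D_{x,α} u‖_{L²_x}`. -/
theorem H1_alpha_bounds (α : ℝ) (hα : 1 < α) :
    ∃ C : ℝ, 0 < C ∧ ∀ u : ℝ → ℝ,
      (∀ x ∈ Ioo (0:ℝ) 1, DifferentiableAt ℝ u x) →
      eL2x u < ⊤ → eL2x (Dtw α u) < ⊤ →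
      eL2x (fun x => u x / x) ≤ ENNReal.ofReal C * eL2x (Dtw α u) ∧
      eL2x (deriv u) ≤ ENNReal.ofReal C * eL2x (Dtw α u) :=
  ⟨1, one_pos, fun u hu hL _ => by simpa using H1_alpha_bounds_general hα.le u hu hL⟩
end

section
/- Let α > 1 and let u ∈ C²((0,1)) be such that u, D_{x,α}u and D*_{x,α}D_{x,α}u all belong to L²_x. Then there is a constant C, depending only on α, such that ‖x^{−2} u‖_{L²_x} + ‖x^{−1} u'‖_{L²_x} + ‖u''‖_{L²_x} ≤ C ( ‖u‖_{L²_x} + ‖D_{x,α}u‖_{L²_x} + ‖D*_{x,α}D_{x,α}u‖_{L²_x} ). -/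
open MeasureTheory Set
open scoped ENNReal

/-!
For `D_δ g = g' + (δ/x) g` and `κ = σ/2 - δ`, expand `x^(σ-1) (κ g + x D_δ g)² ≥ 0`: the cross
term is, up to a multiple of `g² x^(σ-1)`, the derivative of `κ g² x^σ`, so that
`κ² ∫ₐᵇ g² x^(σ-1) ≤ κ [g² x^σ]ₐᵇ + ∫ₐᵇ (D_δ g)² x^(σ+1)`.
If `κ > 0`, only the boundary term at `b` matters, and a good `b` is found by averaging. If `κ < 0`,
only the one at `a` matters, and `g ∈ L²_x` forces it to vanish as `a → 0`. This Hardy inequality is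
applied to `u` with `δ = α` and to `w = D_α u` with `δ = 1 - α`, since `D*_α = -D_{1-α}`; on
`(0, 1)`, `u'/x` and `u''` are linear combinations of `u/x²`, `w/x` and `D*_α w`.
-/

open Filter Topology
open scoped NNReal

/-- The weighted energy `∫_s g(x)² x^σ dx`. On `s = (0, 1)` and for `σ = 1` it is the square of
the `L²_x` norm. It is extended-valued so that no integrability needs to be tracked. -/
noncomputable def weightedEnergy (σ : ℝ) (g : ℝ → ℝ) (s : Set ℝ) : ℝ≥0∞ :=
  ∫⁻ x in s, ENNReal.ofReal (g x ^ 2 * x ^ σ)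

section WeightedEnergy

variable {σ τ : ℝ} {g : ℝ → ℝ} {s t : Set ℝ} {a b : ℝ}

lemma weightedEnergy_mono_set (hst : s ⊆ t) : weightedEnergy σ g s ≤ weightedEnergy σ g t :=
  lintegral_mono_set hst

lemma weightedEnergy_le_mul_of_rpow_le {c : ℝ} (hc : 0 ≤ c) (hs : MeasurableSet s)
    (h : ∀ x ∈ s, x ^ σ ≤ c * x ^ τ) :
    weightedEnergy σ g s ≤ ENNReal.ofReal c * weightedEnergy τ g s := by
  rw [weightedEnergy, weightedEnergy, ← lintegral_const_mul' _ _ ENNReal.ofReal_ne_top]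
  refine setLIntegral_mono' hs fun x hx ↦ ?_
  rw [← ENNReal.ofReal_mul hc, mul_left_comm]
  gcongr
  exact h x hx

lemma continuousOn_sq_mul_rpow (hs : s ⊆ Ioi 0) (hg : ContinuousOn g s) :
    ContinuousOn (fun x ↦ g x ^ 2 * x ^ σ) s :=
  (hg.pow 2).mul (continuousOn_id.rpow_const fun _ hx ↦ Or.inl (hs hx).ne')

lemma ofReal_integral_sq_mul_rpow (ha : 0 < a) (hab : a ≤ b) (hg : ContinuousOn g (Icc a b)) :
    ENNReal.ofReal (∫ x in a..b, g x ^ 2 * x ^ σ) = weightedEnergy σ g (Ioo a b) := by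
  have hpos : Icc a b ⊆ Ioi 0 := fun x hx ↦ ha.trans_le hx.1
  rw [intervalIntegral.integral_of_le hab, integral_Ioc_eq_integral_Ioo]
  refine ofReal_integral_eq_lintegral_ofReal
    ((continuousOn_sq_mul_rpow hpos hg).integrableOn_Icc.mono_set Ioo_subset_Icc_self) ?_
  filter_upwards [ae_restrict_mem measurableSet_Ioo] with x hx
  have hx0 : 0 < x := ha.trans hx.1
  positivity

lemma mul_weightedEnergy_Ioo_le_of_forall {k M : ℝ≥0∞} (hab : a < b)
    (h : ∀ c ∈ Ioo a b, ∀ d ∈ Ioo a b, k * weightedEnergy σ g (Ioo c d) ≤ M) :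
    k * weightedEnergy σ g (Ioo a b) ≤ M := by
  obtain ⟨c, hc_anti, hc_mem, hc_lim⟩ := exists_seq_strictAnti_tendsto' hab
  obtain ⟨d, hd_mono, hd_mem, hd_lim⟩ := exists_seq_strictMono_tendsto' hab
  have hunion : ⋃ n, Ioo (c n) (d n) = Ioo a b :=
    iUnion_Ioo_of_mono_of_isGLB_of_isLUB hc_anti.antitone hd_mono.monotone
      (isGLB_of_tendsto_atTop hc_anti.antitone hc_lim)
      (isLUB_of_tendsto_atTop hd_mono.monotone hd_lim)
  have hdir : Directed (· ⊆ ·) fun n ↦ Ioo (c n) (d n) :=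
    Monotone.directed_le fun m n hmn ↦
      Ioo_subset_Ioo (hc_anti.antitone hmn) (hd_mono.monotone hmn)
  rw [← hunion, weightedEnergy, setLIntegral_iUnion_of_directed _ hdir, ENNReal.mul_iSup]
  exact iSup_le fun n ↦ h _ (hc_mem n) _ (hd_mem n)

lemma tendsto_weightedEnergy_Ioo_zero {R : ℝ} (hR : 0 < R)
    (hfin : weightedEnergy σ g (Ioo 0 R) ≠ ⊤) :
    Tendsto (fun y ↦ weightedEnergy σ g (Ioo 0 y)) (𝓝[>] 0) (𝓝 0) := by
  have hmeasure : Tendsto (volume.restrict (Ioo 0 R) ∘ fun y ↦ Ioo 0 y) (𝓝[>] 0) (𝓝 0) := by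
    refine tendsto_of_tendsto_of_tendsto_of_le_of_le tendsto_const_nhds ?_ (fun _ ↦ zero_le)
      fun y ↦ Measure.restrict_apply_le (Ioo 0 R) (Ioo 0 y)
    simpa using (ENNReal.tendsto_ofReal (tendsto_id (α := ℝ) (x := 𝓝 0))).mono_left
      nhdsWithin_le_nhds
  refine (tendsto_setLIntegral_zero hfin hmeasure).congr' ?_
  filter_upwards [Ioo_mem_nhdsGT hR] with y hy
  rw [weightedEnergy, Measure.restrict_restrict measurableSet_Ioo,
    inter_eq_left.2 (Ioo_subset_Ioo_right hy.2.le)]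

/- The first moment method for the scale-invariant measure `dx / x`, which gives `(a, b)` the
mass `log (b / a)`. -/
lemma exists_sq_mul_rpow_mul_log_le (ha : 0 < a) (hab : a < b) (hg : ContinuousOn g (Ioo a b)) :
    ∃ x ∈ Ioo a b, ENNReal.ofReal (g x ^ 2 * x ^ τ) * ENNReal.ofReal (Real.log (b / a)) ≤
      weightedEnergy (τ - 1) g (Ioo a b) := by
  have hpos : Ioo a b ⊆ Ioi 0 := fun x hx ↦ ha.trans hx.1
  set ν : Measure ℝ := volume.withDensity fun x ↦ ENNReal.ofReal x⁻¹
  have hdensity : Measurable fun x : ℝ ↦ ENNReal.ofReal x⁻¹ := by fun_prop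
  have hmass : ν (Ioo a b) = ENNReal.ofReal (Real.log (b / a)) := by
    rw [withDensity_apply _ measurableSet_Ioo, ← integral_inv_of_pos ha (ha.trans hab)]
    simpa [weightedEnergy, Real.rpow_neg_one] using
      (ofReal_integral_sq_mul_rpow (σ := -1) (g := 1) ha hab.le continuousOn_const).symm
  have hlog : ν (Ioo a b) ≠ 0 := by
    simpa [hmass] using Real.log_pos ((one_lt_div ha).2 hab)
  have hmeas : AEMeasurable (fun x ↦ ENNReal.ofReal (g x ^ 2 * x ^ τ))
      (volume.restrict (Ioo a b)) :=
    ((continuousOn_sq_mul_rpow hpos hg).aemeasurable measurableSet_Ioo).ennreal_ofReal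
  have hmeas_ν : AEMeasurable (fun x ↦ ENNReal.ofReal (g x ^ 2 * x ^ τ)) (ν.restrict (Ioo a b)) :=
    hmeas.mono_ac ((withDensity_absolutelyContinuous _ _).restrict _)
  have htop : ν (Ioo a b) ≠ ⊤ := hmass ▸ ENNReal.ofReal_ne_top
  obtain ⟨x, hx, hle⟩ := exists_le_setLAverage hlog htop hmeas_ν
  refine ⟨x, hx, ?_⟩
  rw [setLAverage_eq, ENNReal.le_div_iff_mul_le (Or.inl hlog) (Or.inl htop), hmass,
    setLIntegral_withDensity_eq_setLIntegral_mul_non_measurable _ hdensity _ measurableSet_Ioo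
      (ae_of_all _ fun _ ↦ ENNReal.ofReal_lt_top)] at hle
  refine hle.trans_eq (setLIntegral_congr_fun measurableSet_Ioo fun y hy ↦ ?_)
  have hy0 : 0 < y := hpos hy
  rw [Pi.mul_apply, ← ENNReal.ofReal_mul (by positivity), Real.rpow_sub_one hy0.ne']
  ring_nf

end WeightedEnergy

section EnergyInequality

variable {δ σ R : ℝ} {g : ℝ → ℝ} {a b : ℝ}

lemma hasDerivAt_sq_mul_rpow {x : ℝ} (hx : 0 < x) (hg : DifferentiableAt ℝ g x) :
    HasDerivAt (fun y ↦ g y ^ 2 * y ^ σ)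
      (2 * g x * Dtw δ g x * x ^ σ + 2 * (σ / 2 - δ) * (g x ^ 2 * x ^ (σ - 1))) x := by
  refine ((hg.hasDerivAt.fun_pow 2).fun_mul
    (Real.hasDerivAt_rpow_const (Or.inl hx.ne'))).congr_deriv ?_
  rw [Dtw, Real.rpow_sub_one hx.ne']
  field_simp
  ring

lemma contDiffOn_Dtw {n : WithTop ℕ∞} (hg : ContDiffOn ℝ (n + 1) g (Ioo 0 R)) :
    ContDiffOn ℝ n (Dtw δ g) (Ioo 0 R) :=
  (hg.deriv_of_isOpen isOpen_Ioo le_rfl).add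
    ((contDiffOn_const.div contDiffOn_id fun _ hx ↦ hx.1.ne').mul (hg.of_le le_self_add))

lemma continuousOn_Dtw (hg : ContDiffOn ℝ 1 g (Ioo 0 R)) : ContinuousOn (Dtw δ g) (Ioo 0 R) :=
  (contDiffOn_Dtw (n := 0) (by simpa using hg)).continuousOn

lemma integral_sq_mul_rpow_le (hg : ContDiffOn ℝ 1 g (Ioo 0 R))
    (ha : 0 < a) (hab : a ≤ b) (hb : b < R) :
    (σ / 2 - δ) ^ 2 * ∫ x in a..b, g x ^ 2 * x ^ (σ - 1) ≤
      (σ / 2 - δ) * (g b ^ 2 * b ^ σ - g a ^ 2 * a ^ σ) +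
        ∫ x in a..b, Dtw δ g x ^ 2 * x ^ (σ + 1) := by
  set κ := σ / 2 - δ
  have hsub : Icc a b ⊆ Ioo 0 R := fun x hx ↦ ⟨ha.trans_le hx.1, hx.2.trans_lt hb⟩
  have hpos : Icc a b ⊆ Ioi 0 := fun x hx ↦ (hsub hx).1
  have hderiv (x : ℝ) (hx : x ∈ Icc a b) := (hasDerivAt_sq_mul_rpow (σ := σ) (δ := δ) (hpos hx)
    ((hg.differentiableOn one_ne_zero).differentiableAt (Ioo_mem_nhds (hsub hx).1 (hsub hx).2))
    ).const_mul κ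
  have hgi := (continuousOn_sq_mul_rpow (σ := σ - 1) hpos
    (hg.continuousOn.mono hsub)).integrableOn_Icc (μ := volume)
  have hDi := (continuousOn_sq_mul_rpow (σ := σ + 1) hpos
    ((continuousOn_Dtw (δ := δ) hg).mono hsub)).integrableOn_Icc (μ := volume)
  have hftc := intervalIntegral.integral_le_sub_of_hasDeriv_right_of_le hab
    (fun x hx ↦ (hderiv x hx).continuousAt.continuousWithinAt)
    (fun x hx ↦ (hderiv x (Ioo_subset_Icc_self hx)).hasDerivWithinAt)
    ((hgi.const_mul (κ ^ 2)).sub hDi) fun x hx ↦ by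
      have hx0 : 0 < x := ha.trans hx.1
      have hsquare : 0 ≤ x ^ (σ - 1) * (κ * g x + x * Dtw δ g x) ^ 2 := by positivity
      have hσ : x ^ σ = x ^ (σ - 1) * x := by
        rw [← Real.rpow_add_one hx0.ne', sub_add_cancel]
      rw [Pi.sub_apply, Real.rpow_add_one hx0.ne', hσ]
      linear_combination hsquare
  simp only [Pi.sub_apply] at hftc
  rw [intervalIntegral.integral_sub
      ((intervalIntegrable_iff_integrableOn_Icc_of_le hab).2 (hgi.const_mul (κ ^ 2)))
      ((intervalIntegrable_iff_integrableOn_Icc_of_le hab).2 hDi),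
    intervalIntegral.integral_const_mul] at hftc
  linarith

lemma weightedEnergy_Ioo_le_of_two_mul_lt (hg : ContDiffOn ℝ 1 g (Ioo 0 R)) (hδσ : 2 * δ < σ)
    (ha : 0 < a) (hab : a ≤ b) (hb : b < R) :
    ENNReal.ofReal ((σ / 2 - δ) ^ 2) * weightedEnergy (σ - 1) g (Ioo a b) ≤
      ENNReal.ofReal ((σ / 2 - δ) * (g b ^ 2 * b ^ σ)) +
        weightedEnergy (σ + 1) (Dtw δ g) (Ioo a b) := by
  have hsub : Icc a b ⊆ Ioo 0 R := fun x hx ↦ ⟨ha.trans_le hx.1, hx.2.trans_lt hb⟩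
  have hκ : 0 < σ / 2 - δ := by linarith
  rw [← ofReal_integral_sq_mul_rpow ha hab (hg.continuousOn.mono hsub),
    ← ofReal_integral_sq_mul_rpow ha hab ((continuousOn_Dtw hg).mono hsub),
    ← ENNReal.ofReal_mul (sq_nonneg _)]
  refine (ENNReal.ofReal_le_ofReal ?_).trans ENNReal.ofReal_add_le
  have hga : 0 ≤ (σ / 2 - δ) * (g a ^ 2 * a ^ σ) := by positivity
  linarith [integral_sq_mul_rpow_le (δ := δ) (σ := σ) hg ha hab hb]

lemma weightedEnergy_Ioo_add_le_of_lt_two_mul (hg : ContDiffOn ℝ 1 g (Ioo 0 R)) (hδσ : σ < 2 * δ)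
    (ha : 0 < a) (hab : a ≤ b) (hb : b < R) :
    ENNReal.ofReal ((δ - σ / 2) ^ 2) * weightedEnergy (σ - 1) g (Ioo a b) +
        ENNReal.ofReal ((δ - σ / 2) * (g b ^ 2 * b ^ σ)) ≤
      ENNReal.ofReal ((δ - σ / 2) * (g a ^ 2 * a ^ σ)) +
        weightedEnergy (σ + 1) (Dtw δ g) (Ioo a b) := by
  have hsub : Icc a b ⊆ Ioo 0 R := fun x hx ↦ ⟨ha.trans_le hx.1, hx.2.trans_lt hb⟩
  have hb0 : 0 < b := ha.trans_le hab
  have hθ : 0 < δ - σ / 2 := by linarith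
  have hint : 0 ≤ ∫ x in a..b, g x ^ 2 * x ^ (σ - 1) :=
    intervalIntegral.integral_nonneg hab fun x hx ↦
      mul_nonneg (sq_nonneg _) (Real.rpow_nonneg (hsub hx).1.le _)
  rw [← ofReal_integral_sq_mul_rpow ha hab (hg.continuousOn.mono hsub),
    ← ofReal_integral_sq_mul_rpow ha hab ((continuousOn_Dtw hg).mono hsub),
    ← ENNReal.ofReal_mul (sq_nonneg _), ← ENNReal.ofReal_add (by positivity) (by positivity)]
  refine (ENNReal.ofReal_le_ofReal ?_).trans ENNReal.ofReal_add_le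
  linarith [integral_sq_mul_rpow_le (δ := δ) (σ := σ) hg ha hab hb]

end EnergyInequality

section Hardy

variable {δ σ τ R : ℝ} {g : ℝ → ℝ} {y : ℝ}

lemma exists_seq_sq_mul_rpow_tendsto_zero (hy : 0 < y) (hg : ContinuousOn g (Ioo 0 y))
    (hfin : weightedEnergy (τ - 1) g (Ioo 0 y) ≠ ⊤) :
    ∃ a : ℕ → ℝ, (∀ n, a n ∈ Ioo 0 y) ∧
      Tendsto (fun n ↦ ENNReal.ofReal (g (a n) ^ 2 * a n ^ τ)) atTop (𝓝 0) := by
  have hpoint (n : ℕ) : ∃ x ∈ Ioo 0 y, ENNReal.ofReal (g x ^ 2 * x ^ τ) ≤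
      weightedEnergy (τ - 1) g (Ioo 0 y) * ((n + 1 : ℕ) : ℝ≥0∞)⁻¹ := by
    have hexp : Real.exp (-(n + 1 : ℕ)) < 1 := 
      Real.exp_lt_one_iff.2 (neg_lt_zero.2 (by positivity))
    have hpos : 0 < y * Real.exp (-(n + 1 : ℕ)) := by positivity
    have hsub : Ioo (y * Real.exp (-(n + 1 : ℕ))) y ⊆ Ioo 0 y := Ioo_subset_Ioo_left hpos.le
    obtain ⟨x, hx, hle⟩ := exists_sq_mul_rpow_mul_log_le (τ := τ) hpos
      (mul_lt_of_lt_one_right hy hexp) (hg.mono hsub)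
    rw [div_mul_cancel_left₀ hy.ne', ← Real.exp_neg, neg_neg, Real.log_exp,
      ENNReal.ofReal_natCast] at hle
    refine ⟨x, hsub hx, ?_⟩
    rw [← div_eq_mul_inv, ENNReal.le_div_iff_mul_le (by simp) (by simp)]
    exact hle.trans (weightedEnergy_mono_set hsub)
  choose a ha hle using hpoint
  refine ⟨a, ha, tendsto_of_tendsto_of_tendsto_of_le_of_le tendsto_const_nhds ?_
    (fun _ ↦ zero_le) hle⟩
  simpa using ENNReal.Tendsto.const_mul
    (ENNReal.tendsto_inv_nat_nhds_zero.comp (tendsto_add_atTop_nat 1)) (Or.inr hfin)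

lemma ofReal_sq_mul_rpow_le_weightedEnergy_Dtw (hg : ContDiffOn ℝ 1 g (Ioo 0 R))
    (hδτ : τ < 2 * δ) (hfin : weightedEnergy (τ - 1) g (Ioo 0 R) ≠ ⊤) (hy : y ∈ Ioo 0 R) :
    ENNReal.ofReal ((δ - τ / 2) * (g y ^ 2 * y ^ τ)) ≤
      weightedEnergy (τ + 1) (Dtw δ g) (Ioo 0 y) := by
  have hsub : Ioo 0 y ⊆ Ioo 0 R := Ioo_subset_Ioo_right hy.2.le
  have hθ : 0 < δ - τ / 2 := by linarith
  obtain ⟨a, ha, hlim⟩ := exists_seq_sq_mul_rpow_tendsto_zero hy.1 (hg.continuousOn.mono hsub)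
    (ne_top_of_le_ne_top hfin (weightedEnergy_mono_set hsub))
  have hlim' := (ENNReal.Tendsto.const_mul (a := ENNReal.ofReal (δ - τ / 2)) hlim
    (Or.inr ENNReal.ofReal_ne_top)).add_const (weightedEnergy (τ + 1) (Dtw δ g) (Ioo 0 y))
  rw [mul_zero, zero_add] at hlim'
  refine ge_of_tendsto' hlim' fun n ↦ ?_
  calc ENNReal.ofReal ((δ - τ / 2) * (g y ^ 2 * y ^ τ))
      ≤ ENNReal.ofReal ((δ - τ / 2) * (g (a n) ^ 2 * a n ^ τ)) +
          weightedEnergy (τ + 1) (Dtw δ g) (Ioo (a n) y) :=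
        le_add_self.trans
          (weightedEnergy_Ioo_add_le_of_lt_two_mul hg hδτ (ha n).1 (ha n).2.le hy.2)
    _ ≤ _ := by
        rw [ENNReal.ofReal_mul hθ.le]
        gcongr
        exact weightedEnergy_mono_set (Ioo_subset_Ioo_left (ha n).1.le)

lemma tendsto_sq_mul_rpow_zero (hR : 0 < R) (hg : ContDiffOn ℝ 1 g (Ioo 0 R))
    (hστ : σ ≤ τ) (hδτ : τ < 2 * δ) (hfin : weightedEnergy (τ - 1) g (Ioo 0 R) ≠ ⊤)
    (hD : weightedEnergy (σ + 1) (Dtw δ g) (Ioo 0 R) ≠ ⊤) :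
    Tendsto (fun y ↦ ENNReal.ofReal ((δ - τ / 2) * (g y ^ 2 * y ^ σ))) (𝓝[>] 0) (𝓝 0) := by
  refine tendsto_of_tendsto_of_tendsto_of_le_of_le' tendsto_const_nhds
    (tendsto_weightedEnergy_Ioo_zero hR hD) (Eventually.of_forall fun _ ↦ zero_le) ?_
  filter_upwards [Ioo_mem_nhdsGT hR] with y hy
  have hy0 : 0 < y := hy.1
  have hscale : y ^ (σ - τ) * y ^ τ = y ^ σ := by rw [← Real.rpow_add hy0, sub_add_cancel]
  calc ENNReal.ofReal ((δ - τ / 2) * (g y ^ 2 * y ^ σ))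
      = ENNReal.ofReal (y ^ (σ - τ)) * ENNReal.ofReal ((δ - τ / 2) * (g y ^ 2 * y ^ τ)) := by
        rw [← ENNReal.ofReal_mul (by positivity), ← hscale]
        ring_nf
    _ ≤ ENNReal.ofReal (y ^ (σ - τ)) * weightedEnergy (τ + 1) (Dtw δ g) (Ioo 0 y) := by
        gcongr
        exact ofReal_sq_mul_rpow_le_weightedEnergy_Dtw hg hδτ hfin hy
    _ ≤ ENNReal.ofReal (y ^ (σ - τ)) *
          (ENNReal.ofReal (y ^ (τ - σ)) * weightedEnergy (σ + 1) (Dtw δ g) (Ioo 0 y)) := by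
        gcongr
        refine weightedEnergy_le_mul_of_rpow_le (by positivity) measurableSet_Ioo fun x hx ↦ ?_
        have hx0 : 0 < x := hx.1
        rw [show τ + 1 = τ - σ + (σ + 1) by ring, Real.rpow_add hx0]
        gcongr
        exact hx.2.le
    _ = weightedEnergy (σ + 1) (Dtw δ g) (Ioo 0 y) := by
        rw [← mul_assoc, ← ENNReal.ofReal_mul (by positivity), ← Real.rpow_add hy0]
        simp

theorem hardy_Dtw_of_lt_two_mul (hR : 0 < R) (hg : ContDiffOn ℝ 1 g (Ioo 0 R))
    (hστ : σ ≤ τ) (hδτ : τ < 2 * δ) (hfin : weightedEnergy (τ - 1) g (Ioo 0 R) ≠ ⊤) :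
    ENNReal.ofReal ((δ - σ / 2) ^ 2) * weightedEnergy (σ - 1) g (Ioo 0 R) ≤
      weightedEnergy (σ + 1) (Dtw δ g) (Ioo 0 R) := by
  rcases eq_or_ne (weightedEnergy (σ + 1) (Dtw δ g) (Ioo 0 R)) ⊤ with hD | hD
  · exact hD ▸ le_top
  have hθσ : 0 < δ - σ / 2 := by linarith
  have hθτ : 0 < δ - τ / 2 := by linarith
  refine mul_weightedEnergy_Ioo_le_of_forall hR fun c hc d hd ↦ ?_
  rcases le_or_gt d c with hdc | hcd
  · simp [weightedEnergy, Ioo_eq_empty_of_le hdc]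
  have hlim := (ENNReal.Tendsto.const_mul (a := ENNReal.ofReal ((δ - σ / 2) / (δ - τ / 2)))
    (tendsto_sq_mul_rpow_zero hR hg hστ hδτ hfin hD) (Or.inr ENNReal.ofReal_ne_top)).add_const
    (weightedEnergy (σ + 1) (Dtw δ g) (Ioo 0 R))
  rw [mul_zero, zero_add] at hlim
  refine ge_of_tendsto hlim ?_
  filter_upwards [Ioo_mem_nhdsGT hc.1] with a ha
  calc ENNReal.ofReal ((δ - σ / 2) ^ 2) * weightedEnergy (σ - 1) g (Ioo c d)
      ≤ ENNReal.ofReal ((δ - σ / 2) ^ 2) * weightedEnergy (σ - 1) g (Ioo a d) := by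
        gcongr
        exact weightedEnergy_mono_set (Ioo_subset_Ioo_left ha.2.le)
    _ ≤ ENNReal.ofReal ((δ - σ / 2) * (g a ^ 2 * a ^ σ)) +
          weightedEnergy (σ + 1) (Dtw δ g) (Ioo a d) :=
        le_self_add.trans (weightedEnergy_Ioo_add_le_of_lt_two_mul hg
          (hστ.trans_lt hδτ) ha.1 (ha.2.trans hcd).le hd.2)
    _ ≤ _ := by
        rw [← ENNReal.ofReal_mul (by positivity), ← mul_assoc (_ / _),
          div_mul_cancel₀ _ hθτ.ne']
        gcongr
        exact weightedEnergy_mono_set (Ioo_subset_Ioo ha.1.le hd.2.le)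

lemma weightedEnergy_Ioo_zero_le_of_two_mul_lt {b : ℝ} (hg : ContDiffOn ℝ 1 g (Ioo 0 R))
    (hδσ : 2 * δ < σ) (hb : b ∈ Ioo 0 R) :
    ENNReal.ofReal ((σ / 2 - δ) ^ 2) * weightedEnergy (σ - 1) g (Ioo 0 b) ≤
      ENNReal.ofReal ((σ / 2 - δ) * (g b ^ 2 * b ^ σ)) +
        weightedEnergy (σ + 1) (Dtw δ g) (Ioo 0 R) := by
  refine mul_weightedEnergy_Ioo_le_of_forall hb.1 fun c hc d hd ↦ ?_
  calc ENNReal.ofReal ((σ / 2 - δ) ^ 2) * weightedEnergy (σ - 1) g (Ioo c d)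
      ≤ ENNReal.ofReal ((σ / 2 - δ) ^ 2) * weightedEnergy (σ - 1) g (Ioo c b) := by
        gcongr
        exact weightedEnergy_mono_set (Ioo_subset_Ioo_right hd.2.le)
    _ ≤ _ := weightedEnergy_Ioo_le_of_two_mul_lt hg hδσ hc.1 hc.2.le hb.2
    _ ≤ _ := by
        gcongr
        exact weightedEnergy_mono_set (Ioo_subset_Ioo hc.1.le hb.2.le)

lemma rpow_le_rpow_sub_mul_rpow {r x : ℝ} (hr : 0 < r) (hrx : r ≤ x) (hστ : σ ≤ τ) :
    x ^ σ ≤ r ^ (σ - τ) * x ^ τ := by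
  have hx : 0 < x := hr.trans_le hrx
  calc x ^ σ = x ^ (σ - τ) * x ^ τ := by rw [← Real.rpow_add hx, sub_add_cancel]
    _ ≤ r ^ (σ - τ) * x ^ τ := 
        mul_le_mul_of_nonneg_right (Real.rpow_le_rpow_of_nonpos hr hrx (sub_nonpos.2 hστ))
          (by positivity)

lemma exists_sq_mul_rpow_le_weightedEnergy (hR : 0 < R) (hg : ContinuousOn g (Ioo 0 R))
    (hστ : σ ≤ τ) :
    ∃ b ∈ Ioo (R * Real.exp (-1)) R, ENNReal.ofReal (g b ^ 2 * b ^ σ) ≤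
      ENNReal.ofReal ((R * Real.exp (-1)) ^ (σ - τ)) * weightedEnergy (τ - 1) g (Ioo 0 R) := by
  have hr : 0 < R * Real.exp (-1) := by positivity
  have hsub : Ioo (R * Real.exp (-1)) R ⊆ Ioo 0 R := Ioo_subset_Ioo_left hr.le
  obtain ⟨b, hb, hgb⟩ := exists_sq_mul_rpow_mul_log_le (τ := τ) hr
    (mul_lt_of_lt_one_right hR (Real.exp_lt_one_iff.2 neg_one_lt_zero)) (hg.mono hsub)
  rw [div_mul_cancel_left₀ hR.ne', ← Real.exp_neg, neg_neg, Real.log_exp, ENNReal.ofReal_one,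
    mul_one] at hgb
  refine ⟨b, hb, ?_⟩
  calc ENNReal.ofReal (g b ^ 2 * b ^ σ)
      ≤ ENNReal.ofReal ((R * Real.exp (-1)) ^ (σ - τ) * (g b ^ 2 * b ^ τ)) := by
        rw [mul_left_comm]
        gcongr
        exact rpow_le_rpow_sub_mul_rpow hr hb.1.le hστ
    _ ≤ _ := by
        rw [ENNReal.ofReal_mul (by positivity)]
        gcongr
        exact hgb.trans (weightedEnergy_mono_set hsub)

theorem hardy_Dtw_of_two_mul_lt (hR : 0 < R) (hg : ContDiffOn ℝ 1 g (Ioo 0 R))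
    (hστ : σ ≤ τ) (hδσ : 2 * δ < σ) :
    ENNReal.ofReal ((σ / 2 - δ) ^ 2) * weightedEnergy (σ - 1) g (Ioo 0 R) ≤
      weightedEnergy (σ + 1) (Dtw δ g) (Ioo 0 R) +
        ENNReal.ofReal (((σ / 2 - δ) + (σ / 2 - δ) ^ 2) * (R * Real.exp (-1)) ^ (σ - τ)) *
          weightedEnergy (τ - 1) g (Ioo 0 R) := by
  set κ := σ / 2 - δ with hκ
  have hκ0 : 0 < κ := by linarith
  have hr : 0 < R * Real.exp (-1) := by positivity
  obtain ⟨b, hb, hboundary⟩ := exists_sq_mul_rpow_le_weightedEnergy hR hg.continuousOn hστ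
  set M := (R * Real.exp (-1)) ^ (σ - τ)
  have hb0 : 0 < b := hr.trans hb.1
  have hleft := weightedEnergy_Ioo_zero_le_of_two_mul_lt hg hδσ ⟨hb0, hb.2⟩
  rw [ENNReal.ofReal_mul hκ0.le] at hleft
  have hright : weightedEnergy (σ - 1) g (Ico b R) ≤
      ENNReal.ofReal M * weightedEnergy (τ - 1) g (Ioo 0 R) :=
    calc weightedEnergy (σ - 1) g (Ico b R)
        ≤ ENNReal.ofReal M * weightedEnergy (τ - 1) g (Ico b R) :=
          weightedEnergy_le_mul_of_rpow_le (by positivity) measurableSet_Ico fun x hx ↦ by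
            simpa only [sub_sub_sub_cancel_right] using
              rpow_le_rpow_sub_mul_rpow hr (hb.1.le.trans hx.1) (sub_le_sub_right hστ 1)
      _ ≤ ENNReal.ofReal M * weightedEnergy (τ - 1) g (Ioo 0 R) := by
          gcongr
          exact weightedEnergy_mono_set fun x hx ↦ ⟨hb0.trans_le hx.1, hx.2⟩
  calc ENNReal.ofReal (κ ^ 2) * weightedEnergy (σ - 1) g (Ioo 0 R)
      ≤ ENNReal.ofReal (κ ^ 2) *
          (weightedEnergy (σ - 1) g (Ioo 0 b) + weightedEnergy (σ - 1) g (Ico b R)) := by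
        gcongr
        rw [← Ioo_union_Ico_eq_Ioo hb0 hb.2.le]
        exact lintegral_union_le _ _ _
    _ ≤ ENNReal.ofReal κ * (ENNReal.ofReal M * weightedEnergy (τ - 1) g (Ioo 0 R)) +
          weightedEnergy (σ + 1) (Dtw δ g) (Ioo 0 R) +
          ENNReal.ofReal (κ ^ 2) * (ENNReal.ofReal M * weightedEnergy (τ - 1) g (Ioo 0 R)) := by
        rw [mul_add]
        gcongr
        exact hleft.trans (by gcongr)
    _ = _ := by
        rw [ENNReal.ofReal_mul (by positivity), ENNReal.ofReal_add hκ0.le (sq_nonneg κ)]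
        ring

theorem exists_hardy_Dtw (hR : 0 < R) (hστ : σ ≤ τ) (hδ : τ < 2 * δ ∨ 2 * δ < σ) :
    ∃ C : ℝ≥0, ∀ g : ℝ → ℝ, ContDiffOn ℝ 1 g (Ioo 0 R) →
      weightedEnergy (σ - 1) g (Ioo 0 R) ≤
        C * (weightedEnergy (σ + 1) (Dtw δ g) (Ioo 0 R) + weightedEnergy (τ - 1) g (Ioo 0 R)) := by
  obtain ⟨k, m, hk, hbound⟩ : ∃ k m : ℝ≥0, 0 < k ∧ ∀ g : ℝ → ℝ, ContDiffOn ℝ 1 g (Ioo 0 R) →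
      k * weightedEnergy (σ - 1) g (Ioo 0 R) ≤
        weightedEnergy (σ + 1) (Dtw δ g) (Ioo 0 R) + m * weightedEnergy (τ - 1) g (Ioo 0 R) := by
    rcases hδ with hδ | hδ
    · refine ⟨((δ - σ / 2) ^ 2).toNNReal, 1, Real.toNNReal_pos.2 (sq_pos_of_pos (by linarith)),
        fun g hg ↦ ?_⟩
      rcases eq_or_ne (weightedEnergy (τ - 1) g (Ioo 0 R)) ⊤ with htop | hfin
      · simp [htop]
      · exact (hardy_Dtw_of_lt_two_mul hR hg hστ hδ hfin).trans le_self_add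
    · exact ⟨_, _, Real.toNNReal_pos.2 (sq_pos_of_pos (by linarith)),
        fun g hg ↦ hardy_Dtw_of_two_mul_lt hR hg hστ hδ⟩
  refine ⟨k⁻¹ * (1 + m), fun g hg ↦ ?_⟩
  rw [ENNReal.coe_mul, mul_assoc, ENNReal.coe_inv hk.ne',
    ← ENNReal.mul_le_iff_le_inv (ENNReal.coe_ne_zero.2 hk.ne') ENNReal.coe_ne_top]
  refine (hbound g hg).trans ?_
  rw [ENNReal.coe_add, ENNReal.coe_one, mul_add]
  gcongr
  · exact le_mul_of_one_le_left' le_self_add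
  · exact le_add_self

end Hardy

section WeightedL2

variable {φ ψ : ℝ → ℝ}

lemma eL2x_eq_eLpNorm (φ : ℝ → ℝ) :
    eL2x φ = eLpNorm φ 2
      ((volume.restrict (Ioo (0 : ℝ) 1)).withDensity fun x ↦ ENNReal.ofReal x) := by
  rw [eLpNorm_eq_lintegral_rpow_enorm_toReal two_ne_zero ENNReal.ofNat_ne_top,
    lintegral_withDensity_eq_lintegral_mul_non_measurable _ (by fun_prop)
      (ae_of_all _ fun _ ↦ ENNReal.ofReal_lt_top), eL2x, ENNReal.toReal_ofNat]
  congr 1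
  refine setLIntegral_congr_fun measurableSet_Ioo fun x _ ↦ ?_
  rw [Pi.mul_apply, ENNReal.rpow_ofNat, ← enorm_pow, Real.enorm_of_nonneg (sq_nonneg _),
    ENNReal.ofReal_mul (sq_nonneg _), mul_comm]

lemma eL2x_congr (h : EqOn φ ψ (Ioo 0 1)) : eL2x φ = eL2x ψ := by
  rw [eL2x, eL2x, setLIntegral_congr_fun measurableSet_Ioo fun x hx ↦ by rw [h hx]]

lemma eL2x_add_le (hφ : ContinuousOn φ (Ioo 0 1)) (hψ : ContinuousOn ψ (Ioo 0 1)) :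
    eL2x (fun x ↦ φ x + ψ x) ≤ eL2x φ + eL2x ψ := by
  simp only [eL2x_eq_eLpNorm]
  have hac := withDensity_absolutelyContinuous (volume.restrict (Ioo (0 : ℝ) 1))
    fun x ↦ ENNReal.ofReal x
  exact eLpNorm_add_le ((hφ.aestronglyMeasurable measurableSet_Ioo).mono_ac hac)
    ((hψ.aestronglyMeasurable measurableSet_Ioo).mono_ac hac) one_le_two

lemma eL2x_const_mul (c : ℝ) (φ : ℝ → ℝ) : eL2x (fun x ↦ c * φ x) = ‖c‖ₑ * eL2x φ := by
  simp only [eL2x_eq_eLpNorm]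
  exact eLpNorm_const_smul c φ _ _

lemma eL2x_div_pow (φ : ℝ → ℝ) (n : ℕ) :
    eL2x (fun x ↦ φ x / x ^ n) = weightedEnergy (1 - 2 * n) φ (Ioo 0 1) ^ (1 / 2 : ℝ) := by
  rw [eL2x, weightedEnergy]
  congr 1
  refine setLIntegral_congr_fun measurableSet_Ioo fun x hx ↦ ?_
  have hrpow : x ^ (1 - 2 * n : ℝ) = x / (x ^ n) ^ 2 := by
    rw [Real.rpow_sub hx.1, Real.rpow_one, mul_comm, Real.rpow_mul hx.1.le, Real.rpow_natCast,
      Real.rpow_two]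
  rw [hrpow, div_pow, div_mul_eq_mul_div, mul_div_assoc]

end WeightedL2

section TwistedSobolev

variable {α δ : ℝ} {u : ℝ → ℝ}

lemma exists_eL2x_div_pow_succ_le {n : ℕ} (hδ : 1 < δ ∨ δ < -n) :
    ∃ C : ℝ≥0, ∀ g : ℝ → ℝ, ContDiffOn ℝ 1 g (Ioo 0 1) →
      eL2x (fun x ↦ g x / x ^ (n + 1)) ≤
        C * (eL2x (fun x ↦ Dtw δ g x / x ^ n) + eL2x g) := by
  obtain ⟨C, hhardy⟩ := exists_hardy_Dtw (δ := δ) (σ := -(2 * n)) (τ := 2) one_pos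
    (by linarith [n.cast_nonneg (α := ℝ)]) (hδ.imp (by intro; linarith) (by intro; linarith))
  refine ⟨C ^ (1 / 2 : ℝ), fun g hg ↦ ?_⟩
  have henergy := hhardy g hg
  rw [show -(2 * n : ℝ) - 1 = 1 - 2 * (n + 1 : ℕ) by push_cast; ring,
    show -(2 * n : ℝ) + 1 = 1 - 2 * n by ring,
    show (2 - 1 : ℝ) = 1 - 2 * (0 : ℕ) by norm_num] at henergy
  have hnorm := eL2x_div_pow g 0
  simp only [pow_zero, div_one] at hnorm
  rw [eL2x_div_pow, eL2x_div_pow, hnorm]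
  calc weightedEnergy (1 - 2 * (n + 1 : ℕ)) g (Ioo 0 1) ^ (1 / 2 : ℝ)
      ≤ (C * (weightedEnergy (1 - 2 * n) (Dtw δ g) (Ioo 0 1) +
          weightedEnergy (1 - 2 * (0 : ℕ)) g (Ioo 0 1))) ^ (1 / 2 : ℝ) := by gcongr
    _ ≤ _ := by
        rw [ENNReal.mul_rpow_of_nonneg _ _ one_half_pos.le,
          ENNReal.coe_rpow_of_nonneg _ one_half_pos.le]
        gcongr
        exact ENNReal.rpow_add_le_add_rpow _ _ one_half_pos.le one_half_lt_one.le

lemma eL2x_deriv_div_le (hu : ContDiffOn ℝ 1 u (Ioo 0 1)) :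
    eL2x (fun x ↦ deriv u x / x) ≤
      eL2x (fun x ↦ Dtw α u x / x) + ‖α‖ₑ * eL2x (fun x ↦ u x / x ^ 2) := by
  have hpointwise : EqOn (fun x ↦ deriv u x / x)
      (fun x ↦ Dtw α u x / x + -α * (u x / x ^ 2)) (Ioo 0 1) := fun x hx ↦ by
    have hx0 : x ≠ 0 := hx.1.ne'
    simp only [Dtw]
    field_simp
    ring
  rw [eL2x_congr hpointwise, ← enorm_neg, ← eL2x_const_mul]
  exact eL2x_add_le ((continuousOn_Dtw hu).div continuousOn_id fun _ hx ↦ hx.1.ne')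
    (continuousOn_const.mul
      (hu.continuousOn.div (continuousOn_pow 2) fun _ hx ↦ (pow_pos hx.1 2).ne'))

lemma deriv_Dtw {x : ℝ} (hx : x ≠ 0) (hu : DifferentiableAt ℝ u x)
    (hu' : DifferentiableAt ℝ (deriv u) x) :
    deriv (Dtw α u) x = deriv (deriv u) x + α / x * deriv u x - α / x ^ 2 * u x := by
  have hdiv : HasDerivAt (fun y ↦ α / y) (-α / x ^ 2) x := by
    simpa using (hasDerivAt_const x α).fun_div (hasDerivAt_id x) hx
  refine (hu'.hasDerivAt.add (hdiv.fun_mul hu.hasDerivAt)).deriv.trans ?_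
  ring

lemma Dstar_eq_neg_Dtw (α : ℝ) (φ : ℝ → ℝ) : Dstar α φ = -Dtw (1 - α) φ := by
  ext x
  rw [Pi.neg_apply, Dstar, Dtw]
  ring

lemma eL2x_Dtw_one_sub (α : ℝ) (φ : ℝ → ℝ) : eL2x (Dtw (1 - α) φ) = eL2x (Dstar α φ) := by
  simp only [Dstar_eq_neg_Dtw, eL2x, Pi.neg_apply, neg_sq]

lemma eL2x_deriv_deriv_le (hu : ContDiffOn ℝ 2 u (Ioo 0 1)) :
    eL2x (deriv (deriv u)) ≤ eL2x (Dstar α (Dtw α u)) + eL2x (fun x ↦ Dtw α u x / x) +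
      ‖α * (α + 1)‖ₑ * eL2x (fun x ↦ u x / x ^ 2) := by
  have hu' : ContDiffOn ℝ 1 (deriv u) (Ioo 0 1) := hu.deriv_of_isOpen isOpen_Ioo le_rfl
  have hw : ContDiffOn ℝ 1 (Dtw α u) (Ioo 0 1) := contDiffOn_Dtw (n := 1) hu
  have hpointwise : EqOn (deriv (deriv u)) (fun x ↦ Dtw (1 - α) (Dtw α u) x +
      -1 * (Dtw α u x / x) + α * (α + 1) * (u x / x ^ 2)) (Ioo 0 1) := fun x hx ↦ by
    have hx0 : x ≠ 0 := hx.1.ne'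
    have hnhds : Ioo (0 : ℝ) 1 ∈ 𝓝 x := Ioo_mem_nhds hx.1 hx.2
    have hw' := deriv_Dtw (α := α) hx0 ((hu.differentiableOn two_ne_zero).differentiableAt hnhds)
      ((hu'.differentiableOn one_ne_zero).differentiableAt hnhds)
    simp only [hw', Dtw]
    field_simp
    ring
  have hw_div : ContinuousOn (fun x ↦ -1 * (Dtw α u x / x)) (Ioo 0 1) :=
    continuousOn_const.mul (hw.continuousOn.div continuousOn_id fun _ hx ↦ hx.1.ne')
  have hu_div : ContinuousOn (fun x ↦ α * (α + 1) * (u x / x ^ 2)) (Ioo 0 1) :=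
    continuousOn_const.mul
      (hu.continuousOn.div (continuousOn_pow 2) fun _ hx ↦ (pow_pos hx.1 2).ne')
  rw [eL2x_congr hpointwise, ← eL2x_const_mul, ← eL2x_Dtw_one_sub]
  refine (eL2x_add_le ((continuousOn_Dtw hw).add hw_div) hu_div).trans ?_
  gcongr
  refine (eL2x_add_le (continuousOn_Dtw hw) hw_div).trans_eq ?_
  rw [eL2x_const_mul, enorm_neg, enorm_one, one_mul]

lemma exists_eL2x_div_sq_le (hα : 1 < |α|) :
    ∃ C : ℝ≥0, ∀ u : ℝ → ℝ, ContDiffOn ℝ 1 u (Ioo 0 1) →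
      eL2x (fun x ↦ u x / x ^ 2) ≤ C * (eL2x (fun x ↦ Dtw α u x / x) + eL2x u) := by
  simpa only [one_add_one_eq_two, pow_one] using exists_eL2x_div_pow_succ_le (n := 1)
    (by simpa only [Nat.cast_one, lt_neg (b := α)] using lt_abs.1 hα)

lemma exists_eL2x_div_le (hα : 1 < |α|) :
    ∃ C : ℝ≥0, ∀ w : ℝ → ℝ, ContDiffOn ℝ 1 w (Ioo 0 1) →
      eL2x (fun x ↦ w x / x) ≤ C * (eL2x (Dstar α w) + eL2x w) := by
  have hδ : 1 < 1 - α ∨ 1 - α < -(0 : ℕ) :=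
    (lt_abs.1 hα).symm.imp (by intro; linarith) (by intro; push_cast; linarith)
  simpa only [zero_add, pow_one, pow_zero, div_one, eL2x_Dtw_one_sub] using
    exists_eL2x_div_pow_succ_le hδ

lemma eL2x_add_eL2x_deriv_add_le (hu : ContDiffOn ℝ 2 u (Ioo 0 1)) :
    eL2x (fun x ↦ u x / x ^ 2) + eL2x (fun x ↦ deriv u x / x) + eL2x (deriv (deriv u)) ≤
      (1 + ‖α‖ₑ + ‖α * (α + 1)‖ₑ) * eL2x (fun x ↦ u x / x ^ 2) +
        2 * eL2x (fun x ↦ Dtw α u x / x) + eL2x (Dstar α (Dtw α u)) := by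
  refine (add_le_add (add_le_add_right (eL2x_deriv_div_le (α := α) (hu.of_le one_le_two)) _)
    (eL2x_deriv_deriv_le (α := α) hu)).trans_eq ?_
  ring

theorem H2_alpha_bounds_general (α : ℝ) (hα : 1 < |α|) :
    ∃ C : ℝ, 0 < C ∧ ∀ u : ℝ → ℝ, ContDiffOn ℝ 2 u (Ioo 0 1) →
      eL2x (fun x ↦ u x / x ^ 2) + eL2x (fun x ↦ deriv u x / x) + eL2x (deriv (deriv u)) ≤
        ENNReal.ofReal C * (eL2x u + eL2x (Dtw α u) + eL2x (Dstar α (Dtw α u))) := by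
  obtain ⟨C₁, hC₁⟩ := exists_eL2x_div_sq_le hα
  obtain ⟨C₂, hC₂⟩ := exists_eL2x_div_le hα
  let K : ℝ≥0 := 1 + ‖α‖₊ + ‖α * (α + 1)‖₊
  refine ⟨(K * (C₁ * (C₂ + 1)) + 2 * C₂ + 1 : ℝ≥0), by positivity, fun u hu ↦ ?_⟩
  rw [ENNReal.ofReal_coe_nnreal]
  set S := eL2x u + eL2x (Dtw α u) + eL2x (Dstar α (Dtw α u)) with hS
  have hsum : eL2x (Dstar α (Dtw α u)) + eL2x (Dtw α u) ≤ S := by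
    rw [hS, add_assoc, add_comm (eL2x (Dtw α u))]
    exact le_add_self
  have hw : eL2x (fun x ↦ Dtw α u x / x) ≤ C₂ * S :=
    (hC₂ _ (contDiffOn_Dtw (n := 1) hu)).trans (by gcongr)
  have hu_div : eL2x (fun x ↦ u x / x ^ 2) ≤ C₁ * (C₂ * S + S) := by
    refine (hC₁ u (hu.of_le one_le_two)).trans ?_
    gcongr
    exact le_self_add.trans le_self_add
  calc _ ≤ K * eL2x (fun x ↦ u x / x ^ 2) + 2 * eL2x (fun x ↦ Dtw α u x / x) +
          eL2x (Dstar α (Dtw α u)) := eL2x_add_eL2x_deriv_add_le hu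
    _ ≤ K * (C₁ * (C₂ * S + S)) + 2 * (C₂ * S) + S := by gcongr; exact le_add_self
    _ = _ := by
        push_cast
        ring

end TwistedSobolev

/-- The `m = 2` case of the norm comparison: for `α > 1` there is `C = C(α) > 0` such that
for every `u ∈ C²((0,1))` with `u`, `D_{x,α}u` and `D*_{x,α}D_{x,α}u` in `L²_x`,
`‖x^{−2}u‖ + ‖x^{−1}u'‖ + ‖u''‖ ≤ C(‖u‖ + ‖D_{x,α}u‖ + ‖D*_{x,α}D_{x,α}u‖)`. -/
theorem H2_alpha_bounds (α : ℝ) (hα : 1 < α) :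
    ∃ C : ℝ, 0 < C ∧ ∀ u : ℝ → ℝ, ContDiffOn ℝ 2 u (Ioo (0:ℝ) 1) →
      eL2x u < ⊤ → eL2x (Dtw α u) < ⊤ → eL2x (Dstar α (Dtw α u)) < ⊤ →
      eL2x (fun x => u x / x ^ 2) + eL2x (fun x => deriv u x / x) + eL2x (deriv (deriv u))
        ≤ ENNReal.ofReal C *
            (eL2x u + eL2x (Dtw α u) + eL2x (Dstar α (Dtw α u))) := by
  obtain ⟨C, hC, hbound⟩ := H2_alpha_bounds_general α (lt_abs.2 (Or.inl hα))
  exact ⟨C, hC, fun u hu _ _ _ ↦ hbound u hu⟩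
end
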